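/- Let q be a prime power, μ ∈ ℚ, and α ∈ ℕ^n with θ(α) = μ·ht(α), α ≠ 0. Then R^{ss}_μ(α, q)/|GL(α, F_q)| = Σ_{α^*} (−1)^{s−1} q^{−Σ_{i<j} ⟨α^j, α^i⟩} ∏_{i=1}^s R(α^i, q)/|GL(α^i, F_q)|, where the sum runs over all tuples α^* = (α^1, …, α^s) of non-zero vectors in ℕ^n with Σ_{i=1}^s α^i = α and μ(α^1 + ⋯ + α^i) > μ(α) for all 1 ≤ i ≤ s−1, where R(β, q) = q^{Σ_{1≤i,j≤n} a_{ij} β_i β_j}, |GL(β, F_q)| = ∏_{i=1}^n ∏_{k=0}^{β_i−1} (q^{β_i} − q^k), and ⟨β, γ⟩ = Σ_{i=1}^n β_i γ_i − Σ_{1≤i,j≤n} a_{ij} β_i γ_j is the Euler form of Γ. -/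

import Mathlib

open Matrix BigOperators
open scoped Classical

/-- A representation over `k` of the quiver `Γ` with vertices `{1,…,n}` and `a i j`
arrows from `i` to `j`, of dimension vector `α`. -/
abbrev QRep (n : ℕ) (a : Fin n → Fin n → ℕ) (k : Type*) [Field k] (α : Fin n → ℕ) :=
  ∀ i j : Fin n, Fin (a i j) → Matrix (Fin (α j)) (Fin (α i)) k

/-- A subrepresentation: a family of subspaces stable under all arrow maps. -/
structure SubRep {n : ℕ} {a : Fin n → Fin n → ℕ} {k : Type*} [Field k]
    {α : Fin n → ℕ} (σ : QRep n a k α) where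
  U : ∀ i, Submodule k (Fin (α i) → k)
  stable : ∀ i j (t : Fin (a i j)), ∀ x ∈ U i, (σ i j t).mulVec x ∈ U j

/-- The slope `μ(β) = θ(β)/ht(β)` of a dimension vector. -/
def qSlope (n : ℕ) (θ : (Fin n → ℤ) →ₗ[ℤ] ℤ) (β : Fin n → ℕ) : ℚ :=
  (θ (fun i => (β i : ℤ)) : ℚ) / ((∑ i, β i : ℕ) : ℚ)

/-- `θ(β) = μ · ht(β)`: the vector `β` has slope `μ` (i.e. `β ∈ Δ_μ`). -/
def qSlopeIs (n : ℕ) (θ : (Fin n → ℤ) →ₗ[ℤ] ℤ) (μ : ℚ) (β : Fin n → ℕ) : Prop :=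
  (θ (fun i => (β i : ℤ)) : ℚ) = μ * ((∑ i, β i : ℕ) : ℚ)

/-- A (non-zero) representation is semistable if every non-zero proper
subrepresentation `U` satisfies `μ(U) ≤ μ(M)`. -/
def IsSemistable {n : ℕ} {a : Fin n → Fin n → ℕ} (θ : (Fin n → ℤ) →ₗ[ℤ] ℤ)
    {k : Type*} [Field k] {α : Fin n → ℕ} (σ : QRep n a k α) : Prop :=
  ∀ W : SubRep σ, (∃ i, W.U i ≠ ⊥) → (∃ i, W.U i ≠ ⊤) →
    qSlope n θ (fun i => Module.finrank k (W.U i)) ≤ qSlope n θ α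

/-- `R^{ss}_μ(α, q)`: the number of semistable representations of `Γ` over `F` of
dimension vector `α` of slope `μ` (with `R^{ss}_μ(0, q) = 1`). -/
noncomputable def Rss (F : Type) [Field F] [Fintype F] (n : ℕ) (a : Fin n → Fin n → ℕ)
    (θ : (Fin n → ℤ) →ₗ[ℤ] ℤ) (μ : ℚ) (α : Fin n → ℕ) : ℕ :=
  Nat.card {σ : QRep n a F α // IsSemistable θ σ ∧ qSlopeIs n θ μ α}

/-- The Euler form `⟨β,γ⟩ = Σ_i β_i γ_i − Σ_{i,j} a_{ij} β_i γ_j` of `Γ`. -/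
def eulerForm (n : ℕ) (a : Fin n → Fin n → ℕ) (β γ : Fin n → ℕ) : ℤ :=
  ∑ i, (β i : ℤ) * (γ i : ℤ) - ∑ i, ∑ j, (a i j : ℤ) * (β i : ℤ) * (γ j : ℤ)

/-- `|GL(β, F_q)| = ∏_i ∏_{k=0}^{β_i − 1} (q^{β_i} − q^k)` as a rational number. -/
def cardGLq (q : ℚ) {n : ℕ} (β : Fin n → ℕ) : ℚ :=
  ∏ i, ∏ k ∈ Finset.range (β i), (q ^ (β i) - q ^ k)

/-- `R(β, q) = q^{Σ_{i,j} a_{ij} β_i β_j}`, the number of representations of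
dimension vector `β`. -/
def Rall (q : ℚ) (n : ℕ) (a : Fin n → Fin n → ℕ) (β : Fin n → ℕ) : ℚ :=
  q ^ (∑ i, ∑ j, a i j * β i * β j)

/-! ### An abstract alternating chain count on a finite poset -/

/-- `hh Q x` is the alternating count of chains of elements `< x` satisfying `Q`. -/
noncomputable def hh {X : Type} [PartialOrder X] [Fintype X] (Q : X → Prop) : X → ℚ :=
  (wellFounded_lt (α := X)).fix fun x ih => 1 - ∑ y : {y : X // y < x ∧ Q y}, ih y.1 y.2.1

theorem hh_eq {X : Type} [PartialOrder X] [Fintype X] (Q : X → Prop) (x : X) :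
    hh Q x = 1 - ∑ y with y < x ∧ Q y, hh Q y := by
  rw [hh, WellFounded.fix_eq]
  congr 1
  symm
  exact Finset.sum_subtype _ (by simp) _

theorem hh_embed {X Y : Type} [PartialOrder X] [Fintype X] [PartialOrder Y] [Fintype Y]
    (Q : X → Prop) (Q' : Y → Prop) (e : X ↪o Y) (hlow : ∀ y x, y ≤ e x → ∃ x', e x' = y)
    (hQ : ∀ x, Q' (e x) ↔ Q x) (x : X) : hh Q' (e x) = hh Q x := by
  induction x using WellFoundedLT.induction with
  | ind x ih =>
    rw [hh_eq, hh_eq]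
    congr 1
    symm
    refine Finset.sum_bij (fun z _ => e z) ?_ ?_ ?_ ?_
    · intro z hz
      simp only [Finset.mem_filter, Finset.mem_univ, true_and] at hz ⊢
      exact ⟨by simpa using hz.1, (hQ z).2 hz.2⟩
    · intro z _ w _ h
      exact e.injective h
    · intro y hy
      simp only [Finset.mem_filter, Finset.mem_univ, true_and] at hy
      obtain ⟨z, rfl⟩ := hlow y x hy.1.le
      refine ⟨z, ?_, rfl⟩
      simp only [Finset.mem_filter, Finset.mem_univ, true_and]
      exact ⟨by simpa using hy.1, (hQ z).1 hy.2⟩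
    · intro z hz
      simp only [Finset.mem_filter, Finset.mem_univ, true_and] at hz
      exact (ih z hz.1).symm

theorem hh_empty {X : Type} [PartialOrder X] [Fintype X] (Q : X → Prop) (x : X)
    (h : ∀ y, y < x → ¬ Q y) : hh Q x = 1 := by
  rw [hh_eq, Finset.filter_false_of_mem]
  · simp
  · intro y _ hy
    exact h y hy.1 hy.2

theorem hh_cone {X : Type} [Lattice X] [Fintype X] (Q : X → Prop) (m : X)
    (hm : ∀ u, Q u → Q (u ⊓ m)) (u : X) (hu : Q (u ⊓ m)) (hum : ¬ u ≤ m) : hh Q u = 0 := by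
  induction u using WellFoundedLT.induction with
  | ind u ih =>
    have h1 : ∑ y with y < u ∧ Q y, hh Q y = ∑ y with y ≤ u ⊓ m ∧ Q y, hh Q y := by
      symm
      apply Finset.sum_subset
      · intro y hy
        simp only [Finset.mem_filter, Finset.mem_univ, true_and] at hy ⊢
        refine ⟨lt_of_le_of_ne (hy.1.trans inf_le_left) ?_, hy.2⟩
        rintro rfl
        exact hum (hy.1.trans inf_le_right)
      · intro y hy hy'
        simp only [Finset.mem_filter, Finset.mem_univ, true_and] at hy hy'
        refine ih y hy.1 (hm y hy.2) ?_
        intro hle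
        exact hy' ⟨le_inf hy.1.le hle, hy.2⟩
    have h2 : ∑ y with y ≤ u ⊓ m ∧ Q y, hh Q y = 1 := by
      have : (Finset.univ.filter fun y => y ≤ u ⊓ m ∧ Q y)
          = insert (u ⊓ m) (Finset.univ.filter fun y => y < u ⊓ m ∧ Q y) := by
        ext y
        simp only [Finset.mem_filter, Finset.mem_univ, true_and, Finset.mem_insert]
        constructor
        · rintro ⟨h, hq⟩
          rcases h.eq_or_lt with h | h
          · exact Or.inl h
          · exact Or.inr ⟨h, hq⟩
        · rintro (rfl | ⟨h, hq⟩)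
          · exact ⟨le_rfl, hu⟩
          · exact ⟨h.le, hq⟩
      rw [this, Finset.sum_insert (by simp), hh_eq Q (u ⊓ m)]
      ring
    rw [hh_eq, h1, h2]
    ring

/-! ### Counting subspaces -/

/-- `|GL_d(F_q)|`. -/
def glq (q : ℚ) (d : ℕ) : ℚ := ∏ k ∈ Finset.range d, (q ^ d - q ^ k)

theorem glq_split (q : ℚ) (k m : ℕ) :
    (∏ i ∈ Finset.range k, (q ^ (k + m) - q ^ i)) * (q ^ (k * m) * glq q m) = glq q (k + m) := by
  unfold glq
  rw [Finset.prod_range_add]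
  congr 1
  have : ∀ x ∈ Finset.range m, q ^ (k + m) - q ^ (k + x) = q ^ k * (q ^ m - q ^ x) := by
    intro x _
    ring
  rw [Finset.prod_congr rfl this, Finset.prod_mul_distrib]
  simp [pow_mul]

theorem glq_ne_zero (q : ℚ) (hq : 1 < q) (d : ℕ) : glq q d ≠ 0 := by
  unfold glq
  rw [Finset.prod_ne_zero_iff]
  intro k hk
  have := pow_lt_pow_right₀ hq (Finset.mem_range.1 hk)
  exact (sub_pos.2 this).ne'

section
variable {F : Type} [Field F] [Fintype F]

theorem card_li_rat (V : Type) [AddCommGroup V] [Module F V] [Finite V] (k : ℕ)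
    (hk : k ≤ Module.finrank F V) :
    (Nat.card {s : Fin k → V // LinearIndependent F s} : ℚ) =
      ∏ i ∈ Finset.range k, ((Fintype.card F : ℚ) ^ Module.finrank F V - (Fintype.card F : ℚ) ^ i) := by
  rw [card_linearIndependent hk, Finset.prod_range, Nat.cast_prod]
  refine Finset.prod_congr rfl fun i _ => ?_
  rw [Nat.cast_sub]
  · push_cast
    rfl
  · exact Nat.pow_le_pow_right Fintype.card_pos (i.2.le.trans hk)

theorem card_li_span (V : Type) [AddCommGroup V] [Module F V] [Finite V] (k : ℕ) :
    Nat.card {s : Fin k → V // LinearIndependent F s} =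
      Nat.card (Σ W : {W : Submodule F V // Module.finrank F W = k},
        {s : Fin k → W.1 // LinearIndependent F s}) := by
  refine Nat.card_congr ?_
  refine
    { toFun := fun s => ⟨⟨Submodule.span F (Set.range s.1), ?_⟩,
        ⟨fun i => ⟨s.1 i, Submodule.subset_span ⟨i, rfl⟩⟩, ?_⟩⟩
      invFun := fun p => ⟨fun i => (p.2.1 i : V), ?_⟩
      left_inv := ?_
      right_inv := ?_ }
  · simpa using finrank_span_eq_card s.2
  · exact linearIndependent_span s.2
  · exact p.2.2.map' p.1.1.subtype (Submodule.ker_subtype _)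
  · intro s
    rfl
  · rintro ⟨⟨W, hW⟩, ⟨s, hs⟩⟩
    have hspan : Submodule.span F (Set.range fun i => (s i : V)) = W := by
      apply Submodule.eq_of_le_of_finrank_eq
      · rw [Submodule.span_le]
        rintro _ ⟨i, rfl⟩
        exact (s i).2
      · rw [hW]
        have : LinearIndependent F (fun i => (s i : V)) :=
          hs.map' W.subtype (Submodule.ker_subtype _)
        simpa using finrank_span_eq_card this
    have key : ∀ (W' : Submodule F V) (_ : W' = W) (h1 : Module.finrank F W' = k)
        (h2 : ∀ i, (s i : V) ∈ W')
        (h3 : LinearIndependent F (fun i => (⟨(s i : V), h2 i⟩ : W'))),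
        (⟨⟨W', h1⟩, ⟨fun i => ⟨(s i : V), h2 i⟩, h3⟩⟩ :
          Σ W : {W : Submodule F V // Module.finrank F W = k},
            {s : Fin k → W.1 // LinearIndependent F s}) = ⟨⟨W, hW⟩, ⟨s, hs⟩⟩ := by
      rintro _ rfl _ _ _
      rfl
    exact key _ hspan _ _ _

theorem card_gr (V : Type) [AddCommGroup V] [Module F V] [Finite V] (k m : ℕ)
    (hk : k + m = Module.finrank F V) :
    (Nat.card {W : Submodule F V // Module.finrank F W = k} : ℚ) *
      (glq (Fintype.card F) k * ((Fintype.card F : ℚ) ^ (k * m) * glq (Fintype.card F) m)) =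
      glq (Fintype.card F) (k + m) := by
  have := Fintype.ofFinite {W : Submodule F V // Module.finrank F W = k}
  have h1 := card_li_rat (F := F) V k (by omega)
  rw [card_li_span, Nat.card_sigma] at h1
  push_cast at h1
  have : ∀ W ∈ (Finset.univ : Finset {W : Submodule F V // Module.finrank F W = k}),
      (Nat.card {s : Fin k → W.1 // LinearIndependent F s} : ℚ) = glq (Fintype.card F) k := by
    intro W _
    rw [card_li_rat _ _ W.2.ge, W.2]
    rfl
  rw [Finset.sum_congr rfl this] at h1
  rw [← glq_split, hk, ← h1]
  simp
  ring
end

/-! ### Representations on graded vector spaces -/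

section
variable {F : Type} [Field F]

noncomputable instance fintypeSubmodule (V : Type) [AddCommGroup V] [Module F V] [Finite V] :
    Fintype (Submodule F V) := Fintype.ofFinite _

noncomputable instance fintypeLin (V W : Type) [AddCommGroup V] [Module F V] [Finite V]
    [AddCommGroup W] [Module F W] [Finite W] : Fintype (V →ₗ[F] W) :=
  have : Finite (V →ₗ[F] W) := DFunLike.finite _
  Fintype.ofFinite _

variable (F) in
/-- Representations of the quiver on a graded vector space. -/
abbrev GRep {n : ℕ} (a : Fin n → Fin n → ℕ) (V : Fin n → Type) [∀ i, AddCommGroup (V i)]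
    [∀ i, Module F (V i)] :=
  ∀ i j : Fin n, Fin (a i j) → (V i →ₗ[F] V j)

variable {n : ℕ} {a : Fin n → Fin n → ℕ} {V : Fin n → Type} [∀ i, AddCommGroup (V i)]
    [∀ i, Module F (V i)] [∀ i, Finite (V i)]

/-- Stability of a graded subspace. -/
def Stab (σ : GRep F a V) (U : ∀ i, Submodule F (V i)) : Prop :=
  ∀ i j t, ∀ x ∈ U i, σ i j t x ∈ U j

/-- Dimension vector of a graded subspace. -/
noncomputable def dm (U : ∀ i, Submodule F (V i)) : Fin n → ℕ := fun i => Module.finrank F (U i)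

/-- The predicate of being stable with dimension vector in `P`. -/
def QQ (P : (Fin n → ℕ) → Prop) (σ : GRep F a V) (U : ∀ i, Submodule F (V i)) : Prop :=
  Stab σ U ∧ P (dm U)

/-- Restriction of a representation to a stable graded subspace. -/
def restr (σ : GRep F a V) (U : ∀ i, Submodule F (V i)) (h : Stab σ U) :
    GRep F a (fun i => U i) :=
  fun i j t => (σ i j t).restrict (h i j t)

/-- Graded subspaces of `U` as graded subspaces of `V`. -/
def grEmb (U : ∀ i, Submodule F (V i)) : (∀ i, Submodule F (U i)) ↪o (∀ i, Submodule F (V i)) where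
  toFun W := fun i => (W i).map (U i).subtype
  inj' := by
    intro W W' h
    funext i
    exact Submodule.map_injective_of_injective (U i).injective_subtype (congrFun h i)
  map_rel_iff' := by
    intro W W'
    simp only [Pi.le_def]
    exact forall_congr' fun i =>
      Submodule.map_le_map_iff_of_injective (U i).injective_subtype _ _

theorem grEmb_apply (U : ∀ i, Submodule F (V i)) (W : ∀ i, Submodule F (U i)) (i : Fin n) :
    grEmb U W i = (W i).map (U i).subtype := rfl

theorem hh_restr (P : (Fin n → ℕ) → Prop) (σ : GRep F a V) (U : ∀ i, Submodule F (V i))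
    (h : Stab σ U) : hh (QQ P σ) U = hh (QQ P (restr σ U h)) ⊤ := by
  have h0 : grEmb U ⊤ = U := by
    funext i
    rw [grEmb_apply]
    simp
  rw [← hh_embed (QQ P (restr σ U h)) (QQ P σ) (grEmb U), h0]
  · intro y x hy
    refine ⟨fun i => (y i).comap (U i).subtype, ?_⟩
    funext i
    rw [grEmb_apply, Submodule.map_comap_subtype, inf_eq_right]
    refine (hy i).trans ?_
    rintro _ ⟨z, _, rfl⟩
    exact z.2
  · intro W
    unfold QQ
    refine and_congr ?_ ?_
    · constructor
      · intro hs i j t x hx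
        have := hs i j t (x : V i) (Submodule.mem_map_of_mem hx)
        obtain ⟨z, hz, hz'⟩ := this
        have : restr σ U h i j t x = z := by
          apply Subtype.ext
          exact hz'.symm
        rw [this]
        exact hz
      · rintro hs i j t _ ⟨z, hz, rfl⟩
        exact ⟨_, hs i j t z hz, rfl⟩
    · have : dm (grEmb U W) = dm W := by
        funext i
        exact (Submodule.equivMapOfInjective _ (U i).injective_subtype (W i)).finrank_eq.symm
      rw [this]

/-- Decomposition of the linear maps preserving a pair of subspaces. -/
noncomputable def presEquiv {A B : Type} [AddCommGroup A] [Module F A] [AddCommGroup B]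
    [Module F B] (U C : Submodule F A) (hUC : IsCompl U C) (U' : Submodule F B) :
    {f : A →ₗ[F] B // ∀ x ∈ U, f x ∈ U'} ≃ (U →ₗ[F] U') × (C →ₗ[F] B) where
  toFun f := (f.1.restrict f.2, f.1.domRestrict C)
  invFun p := ⟨LinearMap.ofIsCompl hUC (U'.subtype ∘ₗ p.1) p.2, by
    intro x hx
    have := LinearMap.ofIsCompl_apply_left hUC (φ := U'.subtype ∘ₗ p.1) (ψ := p.2) ⟨x, hx⟩
    simp only at this
    rw [this]
    exact (p.1 _).2⟩
  left_inv f := by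
    apply Subtype.ext
    apply LinearMap.ofIsCompl_eq
    · intro u
      rfl
    · intro u
      rfl
  right_inv p := by
    refine Prod.ext ?_ ?_
    · ext x
      simp [LinearMap.restrict_apply]
    · ext x
      simp

/-- Decomposition of the representations preserving a graded subspace. -/
noncomputable def stabEquiv (U C : ∀ i, Submodule F (V i)) (hUC : ∀ i, IsCompl (U i) (C i)) :
    {σ : GRep F a V // Stab σ U} ≃
      GRep F a (fun i => U i) × (∀ i j : Fin n, Fin (a i j) → (C i →ₗ[F] V j)) where
  toFun σ := (restr σ.1 U σ.2, fun i j t => (σ.1 i j t).domRestrict (C i))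
  invFun p := ⟨fun i j t => ((presEquiv (U i) (C i) (hUC i) (U j)).symm (p.1 i j t, p.2 i j t)).1,
    fun i j t => ((presEquiv (U i) (C i) (hUC i) (U j)).symm (p.1 i j t, p.2 i j t)).2⟩
  left_inv σ := by
    apply Subtype.ext
    funext i j t
    exact congrArg Subtype.val ((presEquiv (U i) (C i) (hUC i) (U j)).left_inv
      ⟨σ.1 i j t, σ.2 i j t⟩)
  right_inv p := by
    refine Prod.ext ?_ ?_
    · funext i j t
      exact congrArg Prod.fst
        ((presEquiv (U i) (C i) (hUC i) (U j)).right_inv (p.1 i j t, p.2 i j t))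
    · funext i j t
      exact congrArg Prod.snd
        ((presEquiv (U i) (C i) (hUC i) (U j)).right_inv (p.1 i j t, p.2 i j t))

theorem card_homs [Fintype F] (C V : Fin n → Type) [∀ i, AddCommGroup (V i)]
    [∀ i, Module F (V i)] [∀ i, Finite (V i)] [∀ i, AddCommGroup (C i)]
    [∀ i, Module F (C i)] [∀ i, Finite (C i)] :
    Fintype.card (∀ i j : Fin n, Fin (a i j) → (C i →ₗ[F] V j)) =
      Fintype.card F ^ (∑ i, ∑ j, a i j * Module.finrank F (C i) * Module.finrank F (V j)) := by
  rw [Fintype.card_pi, ← Finset.prod_pow_eq_pow_sum]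
  refine Finset.prod_congr rfl fun i _ => ?_
  rw [Fintype.card_pi, ← Finset.prod_pow_eq_pow_sum]
  refine Finset.prod_congr rfl fun j _ => ?_
  rw [Fintype.card_fun, Module.card_eq_pow_finrank (K := F), Module.finrank_linearMap,
    Fintype.card_fin, ← pow_mul]
  congr 1
  ring

theorem sum_stab [Fintype F] (P : (Fin n → ℕ) → Prop) (U : ∀ i, Submodule F (V i)) :
    ∑ σ : GRep F a V with Stab σ U, hh (QQ P σ) U =
      (Fintype.card F : ℚ) ^ (∑ i, ∑ j, a i j *
        (Module.finrank F (V i) - Module.finrank F (U i)) * Module.finrank F (V j)) *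
      ∑ τ : GRep F a (fun i => U i), hh (QQ P τ) ⊤ := by
  choose C hC using fun i => Submodule.exists_isCompl (U i)
  have hdim : ∀ i, Module.finrank F (C i) = Module.finrank F (V i) - Module.finrank F (U i) := by
    intro i
    have := Submodule.finrank_add_eq_of_isCompl (hC i)
    omega
  have h1 : ∑ σ : GRep F a V with Stab σ U, hh (QQ P σ) U =
      ∑ σ : {σ : GRep F a V // Stab σ U}, hh (QQ P (restr σ.1 U σ.2)) ⊤ := by
    rw [Finset.sum_subtype (p := fun σ => Stab σ U) _ (by simp)]
    exact Finset.sum_congr rfl fun σ _ => hh_restr P σ.1 U σ.2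
  have h2 : ∑ σ : {σ : GRep F a V // Stab σ U}, hh (QQ P (restr σ.1 U σ.2)) ⊤ =
      ∑ p : GRep F a (fun i => U i) × (∀ i j : Fin n, Fin (a i j) → (C i →ₗ[F] V j)),
        hh (QQ P p.1) ⊤ :=
    Fintype.sum_equiv (stabEquiv U C hC) _ _ (fun σ => rfl)
  rw [h1, h2, Fintype.sum_prod_type]
  simp only [Finset.sum_const, Finset.card_univ, nsmul_eq_mul]
  rw [← Finset.mul_sum, card_homs]
  simp only [hdim]
  push_cast
  rfl

theorem sum_rec [Fintype F] (P : (Fin n → ℕ) → Prop) :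
    ∑ σ : GRep F a V, hh (QQ P σ) ⊤ =
      (Fintype.card F : ℚ) ^ (∑ i, ∑ j, a i j * Module.finrank F (V i) * Module.finrank F (V j)) -
      ∑ U : (∀ i, Submodule F (V i)) with U < ⊤ ∧ P (dm U),
        (Fintype.card F : ℚ) ^ (∑ i, ∑ j, a i j *
          (Module.finrank F (V i) - Module.finrank F (U i)) * Module.finrank F (V j)) *
        ∑ τ : GRep F a (fun i => U i), hh (QQ P τ) ⊤ := by
  have h1 : ∀ σ ∈ (Finset.univ : Finset (GRep F a V)), hh (QQ P σ) ⊤ = 1 -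
      ∑ U : (∀ i, Submodule F (V i)) with U < ⊤ ∧ P (dm U),
        if Stab σ U then hh (QQ P σ) U else 0 := by
    intro σ _
    rw [hh_eq, ← Finset.sum_filter, Finset.filter_filter]
    congr 1
    refine Finset.sum_congr ?_ fun _ _ => rfl
    ext U
    rw [Finset.mem_filter, Finset.mem_filter, QQ]
    tauto
  rw [Finset.sum_congr rfl h1, Finset.sum_sub_distrib, Finset.sum_comm]
  congr 1
  · have := card_homs (F := F) (a := a) V V
    simp only [Finset.sum_const, Finset.card_univ, nsmul_eq_mul, mul_one]
    rw [this]
    push_cast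
    rfl
  · refine Finset.sum_congr rfl fun U _ => ?_
    rw [← sum_stab, Finset.sum_filter]

end

section
variable {F : Type} [Field F] [Fintype F]
variable {n : ℕ} {a : Fin n → Fin n → ℕ}

theorem card_gr_vec {V : Fin n → Type} [∀ i, AddCommGroup (V i)]
    [∀ i, Module F (V i)] [∀ i, Finite (V i)] (β γ : Fin n → ℕ)
    (h : ∀ i, β i + γ i = Module.finrank F (V i)) :
    ((Finset.univ.filter fun U : (∀ i, Submodule F (V i)) => dm U = β).card : ℚ) *
      (cardGLq (Fintype.card F) β * ((Fintype.card F : ℚ) ^ (∑ i, β i * γ i) *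
        cardGLq (Fintype.card F) γ)) = cardGLq (Fintype.card F) (β + γ) := by
  have h1 : (Finset.univ.filter fun U : (∀ i, Submodule F (V i)) => dm U = β) =
      Fintype.piFinset (fun i => Finset.univ.filter fun W : Submodule F (V i) =>
        Module.finrank F W = β i) := by
    ext U
    simp only [Finset.mem_filter, Finset.mem_univ, true_and, Fintype.mem_piFinset]
    exact funext_iff
  rw [h1, Fintype.card_piFinset]
  unfold cardGLq
  rw [← Finset.prod_pow_eq_pow_sum]
  push_cast
  simp only [← Finset.prod_mul_distrib]
  refine Finset.prod_congr rfl fun i _ => ?_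
  have := card_gr (F := F) (V i) (β i) (γ i) (h i)
  rw [Nat.card_eq_fintype_card, Fintype.card_subtype] at this
  exact this

theorem cardGLq_ne_zero (q : ℚ) (hq : 1 < q) (β : Fin n → ℕ) : cardGLq q β ≠ 0 := by
  unfold cardGLq
  rw [Finset.prod_ne_zero_iff]
  intro i _
  exact glq_ne_zero q hq (β i)

/-- The lists over which the sum runs. -/
def LValid (P : (Fin n → ℕ) → Prop) (β : Fin n → ℕ) (L : List (Fin n → ℕ)) : Prop :=
  L ≠ [] ∧ (∀ x ∈ L, x ≠ 0) ∧ L.sum = β ∧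
    ∀ i : ℕ, 1 ≤ i → i + 1 ≤ L.length → P (L.take i).sum

/-- The term of the sum attached to a list. -/
noncomputable def LTerm (q : ℚ) (a : Fin n → Fin n → ℕ) (L : List (Fin n → ℕ)) : ℚ :=
  (-1 : ℚ) ^ (L.length - 1) *
    q ^ (-(∑ p ∈ Finset.univ.filter (fun p : Fin L.length × Fin L.length => p.1 < p.2),
            eulerForm n a (L.get p.2) (L.get p.1))) *
    ∏ s : Fin L.length, Rall q n a (L.get s) / cardGLq q (L.get s)

theorem eulerForm_add (β γ δ : Fin n → ℕ) :
    eulerForm n a β (γ + δ) = eulerForm n a β γ + eulerForm n a β δ := by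
  unfold eulerForm
  simp only [Pi.add_apply, Nat.cast_add, mul_add, Finset.sum_add_distrib]
  ring

theorem eulerForm_zero (β : Fin n → ℕ) : eulerForm n a β 0 = 0 := by
  simp [eulerForm]

theorem eulerForm_sum (β : Fin n → ℕ) (L : List (Fin n → ℕ)) :
    ∑ i ∈ Finset.range L.length, eulerForm n a β (L.getD i 0) = eulerForm n a β L.sum := by
  induction L with
  | nil => simp [eulerForm_zero]
  | cons x L ih =>
    rw [List.length_cons, Finset.sum_range_succ', List.sum_cons, eulerForm_add, ← ih]
    simp [add_comm]

theorem pair_sum_eq (L : List (Fin n → ℕ)) :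
    ∑ p ∈ Finset.univ.filter (fun p : Fin L.length × Fin L.length => p.1 < p.2),
            eulerForm n a (L.get p.2) (L.get p.1) =
    ∑ j ∈ Finset.range L.length, ∑ i ∈ Finset.range j,
      eulerForm n a (L.getD j 0) (L.getD i 0) := by
  rw [Finset.sum_filter, Fintype.sum_prod_type_right, Finset.sum_range]
  refine Finset.sum_congr rfl fun j _ => ?_
  have h1 : Finset.range (j : ℕ) = (Finset.range L.length).filter (fun i => i < (j : ℕ)) := by
    ext i
    simp only [Finset.mem_range, Finset.mem_filter]
    have := j.2
    omega
  rw [h1, Finset.sum_filter, Finset.sum_range]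
  refine Finset.sum_congr rfl fun i _ => ?_
  simp only [Fin.lt_def]
  split_ifs with hij
  · simp
  · rfl

theorem LTerm_singleton (q : ℚ) (β : Fin n → ℕ) :
    LTerm q a [β] = Rall q n a β / cardGLq q β := by
  unfold LTerm
  rw [pair_sum_eq]
  simp

theorem LTerm_append (q : ℚ) (hq : q ≠ 0) (L : List (Fin n → ℕ)) (hL : L ≠ []) (γ : Fin n → ℕ) :
    LTerm q a (L ++ [γ]) =
      -(q ^ (-eulerForm n a γ L.sum) * (Rall q n a γ / cardGLq q γ) * LTerm q a L) := by
  unfold LTerm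
  rw [pair_sum_eq, pair_sum_eq]
  have hprod : ∀ M : List (Fin n → ℕ),
      ∏ s : Fin M.length, Rall q n a (M.get s) / cardGLq q (M.get s) =
        (M.map fun β => Rall q n a β / cardGLq q β).prod := by
    intro M
    rw [← List.prod_ofFn]
    congr 1
    apply List.ext_getElem <;> simp
  rw [hprod, hprod, List.map_append, List.prod_append, List.map_singleton, List.prod_singleton]
  rw [List.length_append, List.length_singleton, Finset.sum_range_succ]
  have h1 : ∀ j ∈ Finset.range L.length, ∑ i ∈ Finset.range j,
      eulerForm n a ((L ++ [γ]).getD j 0) ((L ++ [γ]).getD i 0) =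
      ∑ i ∈ Finset.range j, eulerForm n a (L.getD j 0) (L.getD i 0) := by
    intro j hj
    refine Finset.sum_congr rfl fun i hi => ?_
    rw [Finset.mem_range] at hi hj
    rw [List.getD_append _ _ _ _ hj, List.getD_append _ _ _ _ (hi.trans hj)]
  have h2 : ∑ i ∈ Finset.range L.length,
      eulerForm n a ((L ++ [γ]).getD L.length 0) ((L ++ [γ]).getD i 0) =
      eulerForm n a γ L.sum := by
    rw [← eulerForm_sum]
    refine Finset.sum_congr rfl fun i hi => ?_
    rw [Finset.mem_range] at hi
    rw [List.getD_append _ _ _ _ hi, List.getD_append_right _ _ _ _ le_rfl]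
    simp
  rw [Finset.sum_congr rfl h1, h2, neg_add, zpow_add₀ hq]
  obtain ⟨m, hm⟩ : ∃ m, L.length = m + 1 :=
    Nat.exists_eq_succ_of_ne_zero (by simpa using hL)
  rw [hm]
  simp only [Nat.add_sub_cancel, pow_succ]
  ring

theorem LValid_iff (P : (Fin n → ℕ) → Prop) (hP : ¬ P 0) (β : Fin n → ℕ) (hβ : β ≠ 0)
    (L : List (Fin n → ℕ)) :
    LValid P β L ↔ L = [β] ∨ ∃ β' < β, P β' ∧ ∃ L', LValid P β' L' ∧ L' ++ [β - β'] = L := by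
  constructor
  · rintro ⟨h1, h2, h3, h4⟩
    rcases List.eq_nil_or_concat L with rfl | ⟨L', γ, rfl⟩
    · exact absurd rfl h1
    · rw [List.concat_eq_append] at *
      by_cases hL' : L' = []
      · subst hL'
        left
        simpa using h3
      · right
        have hlen : 1 ≤ L'.length := List.length_pos_iff.2 hL'
        have hγ : γ ≠ 0 := h2 γ (by simp)
        rw [List.sum_append, List.sum_singleton] at h3
        refine ⟨L'.sum, ?_, ?_, L', ⟨hL', ?_, rfl, ?_⟩, ?_⟩
        · rw [← h3]
          exact lt_add_of_pos_right _ (pos_iff_ne_zero.2 hγ)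
        · have := h4 L'.length hlen (by simp)
          simpa using this
        · intro x hx
          exact h2 x (by simp [hx])
        · intro i hi hi'
          have := h4 i hi (by simp; omega)
          rwa [List.take_append_of_le_length (by omega)] at this
        · rw [← h3, add_tsub_cancel_left]
  · rintro (rfl | ⟨β', hlt, hPβ, L', ⟨h1, h2, h3, h4⟩, rfl⟩)
    · refine ⟨by simp, by simpa using hβ, by simp, ?_⟩
      intro i hi hi'
      simp at hi'
      omega
    · refine ⟨by simp, ?_, ?_, ?_⟩
      · intro x hx
        rw [List.mem_append, List.mem_singleton] at hx
        rcases hx with hx | rfl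
        · exact h2 x hx
        · exact fun h0 => hlt.not_ge (tsub_eq_zero_iff_le.1 h0)
      · rw [List.sum_append, List.sum_singleton, h3, add_tsub_cancel_of_le hlt.le]
      · intro i hi hi'
        rw [List.length_append, List.length_singleton] at hi'
        rw [List.take_append_of_le_length (by omega)]
        rcases Nat.lt_or_ge i L'.length with h | h
        · exact h4 i hi h
        · rw [List.take_of_length_le h, h3]
          exact hPβ

end

section
variable {F : Type} [Field F] [Fintype F]
variable {n : ℕ} {a : Fin n → Fin n → ℕ}

theorem dm_lt {V : Fin n → Type} [∀ i, AddCommGroup (V i)]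
    [∀ i, Module F (V i)] [∀ i, Finite (V i)] (U : ∀ i, Submodule F (V i)) :
    U < ⊤ ↔ dm U < fun i => Module.finrank F (V i) := by
  have hle : dm U ≤ fun i => Module.finrank F (V i) := fun i => Submodule.finrank_le (U i)
  rw [lt_top_iff_ne_top, hle.lt_iff_ne, not_iff_not]
  constructor
  · rintro rfl
    funext i
    simp [dm]
  · intro h
    funext i
    exact Submodule.eq_top_of_finrank_eq (congrFun h i)

theorem exponent_identity (q : ℚ) (hq : q ≠ 0) (β γ : Fin n → ℕ) :
    q ^ (∑ i, ∑ j, a i j * γ i * (β j + γ j)) =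
      q ^ (∑ i, β i * γ i) * q ^ (-eulerForm n a γ β) * Rall q n a γ := by
  unfold Rall
  rw [← zpow_natCast, ← zpow_natCast, ← zpow_natCast, ← zpow_add₀ hq, ← zpow_add₀ hq]
  congr 1
  unfold eulerForm
  push_cast
  simp only [mul_add, Finset.sum_add_distrib]
  have : ∑ i, (β i : ℤ) * γ i = ∑ i, (γ i : ℤ) * β i :=
    Finset.sum_congr rfl fun i _ => mul_comm _ _
  rw [this]
  ring

theorem alg_step (c x1 x2 x3 x4 x5 g : ℚ) (hg : g ≠ 0) :
    c * (x2 * x1 * x3 * (x5 * x4)) = c * (x5 * (x2 * g)) * (x1 * (x3 / g) * x4) := by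
  field_simp

theorem main_count (P : (Fin n → ℕ) → Prop) (hP : ¬ P 0) (N : ℕ) :
    ∀ β : Fin n → ℕ, ∑ i, β i = N → β ≠ 0 →
      ∃ D : Finset (List (Fin n → ℕ)), (∀ L, L ∈ D ↔ LValid P β L) ∧
        ∀ (V : Fin n → Type) [∀ i, AddCommGroup (V i)] [∀ i, Module F (V i)] [∀ i, Finite (V i)],
          (∀ i, Module.finrank F (V i) = β i) →
          ∑ σ : GRep F a V, hh (QQ P σ) ⊤ =
            cardGLq (Fintype.card F) β * ∑ L ∈ D, LTerm (Fintype.card F) a L := by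
  induction N using Nat.strong_induction_on with
  | _ N ih =>
  intro β hN hβ
  have ih' : ∀ β' : Fin n → ℕ, ∃ D : Finset (List (Fin n → ℕ)), β' < β → P β' →
      (∀ L, L ∈ D ↔ LValid P β' L) ∧
        ∀ (V : Fin n → Type) [∀ i, AddCommGroup (V i)] [∀ i, Module F (V i)] [∀ i, Finite (V i)],
          (∀ i, Module.finrank F (V i) = β' i) →
          ∑ σ : GRep F a V, hh (QQ P σ) ⊤ =
            cardGLq (Fintype.card F) β' * ∑ L ∈ D, LTerm (Fintype.card F) a L := by
    intro β'
    by_cases h : β' < β ∧ P β'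
    · have hne : β' ≠ 0 := by
        rintro rfl
        exact hP h.2
      have hlt : ∑ i, β' i < N := by
        rw [← hN]
        obtain ⟨h1, i, h2⟩ := Pi.lt_def.1 h.1
        exact Finset.sum_lt_sum (fun i _ => h1 i) ⟨i, Finset.mem_univ _, h2⟩
      obtain ⟨D, hD⟩ := ih _ hlt β' rfl hne
      exact ⟨D, fun _ _ => hD⟩
    · exact ⟨∅, fun h1 h2 => absurd ⟨h1, h2⟩ h⟩
  choose D hD using ih'
  set q : ℚ := (Fintype.card F : ℚ) with hqdef
  have hq1 : 1 < q := by
    rw [hqdef]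
    exact_mod_cast Fintype.one_lt_card (α := F)
  have hq0 : q ≠ 0 := by positivity
  set B : Finset (Fin n → ℕ) := (Finset.Iio β).filter P with hB
  have hmemB : ∀ β', β' ∈ B ↔ β' < β ∧ P β' := by
    intro β'
    simp [hB]
  let E : Finset (List (Fin n → ℕ)) := B.biUnion fun β' => (D β').image (· ++ [β - β'])
  have hnotmem : [β] ∉ E := by
    intro h
    simp only [E, Finset.mem_biUnion, Finset.mem_image] at h
    obtain ⟨β', hβ', L', hL', h⟩ := h
    have h3 := (((hD β' ((hmemB _).1 hβ').1 ((hmemB _).1 hβ').2).1 L').1 hL').1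
    have := congrArg List.length h
    simp at this
    exact h3 this
  have hS : ∑ L ∈ insert [β] E, LTerm q a L = Rall q n a β / cardGLq q β -
      ∑ β' ∈ B, q ^ (-eulerForm n a (β - β') β') *
        (Rall q n a (β - β') / cardGLq q (β - β')) * ∑ L ∈ D β', LTerm q a L := by
    rw [Finset.sum_insert hnotmem, LTerm_singleton, sub_eq_add_neg, ← Finset.sum_neg_distrib]
    congr 1
    rw [Finset.sum_biUnion]
    · refine Finset.sum_congr rfl fun β' hβ' => ?_
      rw [Finset.sum_image]
      · rw [Finset.mul_sum, ← Finset.sum_neg_distrib]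
        refine Finset.sum_congr rfl fun L hL => ?_
        have hv := ((hD β' ((hmemB _).1 hβ').1 ((hmemB _).1 hβ').2).1 L).1 hL
        rw [LTerm_append q hq0 L hv.1, hv.2.2.1]
      · intro L _ L' _ h
        exact List.append_cancel_right h
    · intro β₁ h₁ β₂ h₂ hne
      rw [Function.onFun, Finset.disjoint_left]
      intro M hM hM'
      rw [Finset.mem_image] at hM hM'
      obtain ⟨L₁, hL₁, e₁⟩ := hM
      obtain ⟨L₂, hL₂, e₂⟩ := hM'
      have hb₁ := (hmemB _).1 h₁
      have hb₂ := (hmemB _).1 h₂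
      have hv₁ := ((hD β₁ hb₁.1 hb₁.2).1 L₁).1 hL₁
      have hv₂ := ((hD β₂ hb₂.1 hb₂.2).1 L₂).1 hL₂
      have := List.append_inj_left' (e₁.trans e₂.symm) rfl
      apply hne
      rw [← hv₁.2.2.1, ← hv₂.2.2.1, this]
  refine ⟨insert [β] E, ?_, ?_⟩
  · intro L
    rw [LValid_iff P hP β hβ, Finset.mem_insert]
    refine or_congr Iff.rfl ?_
    simp only [E, Finset.mem_biUnion, Finset.mem_image]
    constructor
    · rintro ⟨β', hβ', L', hL', h⟩
      have hb := (hmemB _).1 hβ'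
      exact ⟨β', hb.1, hb.2, L', ((hD β' hb.1 hb.2).1 L').1 hL', h⟩
    · rintro ⟨β', hb1, hb2, L', hL', h⟩
      exact ⟨β', (hmemB _).2 ⟨hb1, hb2⟩, L', ((hD β' hb1 hb2).1 L').2 hL', h⟩
  · intro V _ _ _ hV
    have hVf : (fun i => Module.finrank F (V i)) = β := funext hV
    rw [sum_rec, hS, mul_sub, mul_div_cancel₀ _ (cardGLq_ne_zero q hq1 β)]
    congr 1
    · simp only [hV]
      rfl
    · rw [← Finset.sum_fiberwise_of_maps_to (t := B) (g := dm), Finset.mul_sum]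
      · refine Finset.sum_congr rfl fun β' hβ' => ?_
        have hb := (hmemB _).1 hβ'
        obtain ⟨γ, hγ⟩ : ∃ γ, β = β' + γ := ⟨β - β', (add_tsub_cancel_of_le hb.1.le).symm⟩
        have hsub : β - β' = γ := by rw [hγ, add_tsub_cancel_left]
        have hset : (Finset.univ.filter fun U : (∀ i, Submodule F (V i)) =>
            U < ⊤ ∧ P (dm U)).filter (fun U => dm U = β') =
            Finset.univ.filter fun U => dm U = β' := by
          ext U
          simp only [Finset.mem_filter, Finset.mem_univ, true_and, and_iff_right_iff_imp]
          rintro rfl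
          exact ⟨(dm_lt U).2 (by rw [hVf]; exact hb.1), hb.2⟩
        rw [hset]
        have hcongr : ∀ U ∈ Finset.univ.filter fun U : (∀ i, Submodule F (V i)) => dm U = β',
            q ^ (∑ i, ∑ j, a i j *
              (Module.finrank F (V i) - Module.finrank F (U i)) * Module.finrank F (V j)) *
              ∑ τ : GRep F a (fun i => U i), hh (QQ P τ) ⊤ =
            q ^ (∑ i, ∑ j, a i j * γ i * (β' j + γ j)) *
              (cardGLq q β' * ∑ L ∈ D β', LTerm q a L) := by
          intro U hU
          have hU' : dm U = β' := (Finset.mem_filter.1 hU).2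
          have hU'' : ∀ i, Module.finrank F (U i) = β' i := fun i => congrFun hU' i
          rw [(hD β' hb.1 hb.2).2 (fun i => U i) hU'']
          congr 2
          refine Finset.sum_congr rfl fun i _ => Finset.sum_congr rfl fun j _ => ?_
          rw [hU'', hV, hV, hγ]
          simp
        rw [Finset.sum_congr rfl hcongr, Finset.sum_const, nsmul_eq_mul, hsub,
          exponent_identity q hq0]
        have hc := card_gr_vec (F := F) (V := V) β' γ (by intro i; rw [hV, hγ]; rfl)
        rw [← hqdef] at hc
        rw [hγ, ← hc]
        have hg := cardGLq_ne_zero q hq1 γ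
        exact alg_step _ _ _ _ _ _ _ hg
      · intro U hU
        have hU' := (Finset.mem_filter.1 hU).2
        rw [hmemB]
        refine ⟨?_, hU'.2⟩
        have := (dm_lt U).1 hU'.1
        rwa [hVf] at this

/-! ### Semistability -/

theorem hh_semistable {V : Fin n → Type} [∀ i, AddCommGroup (V i)]
    [∀ i, Module F (V i)] [∀ i, Finite (V i)] (f : (Fin n → ℕ) → ℚ)
    (hf : ∀ β γ, f (β + γ) = f β + f γ) (hV : f (fun i => Module.finrank F (V i)) = 0)
    (σ : GRep F a V) :
    hh (QQ (fun β => 0 < f β) σ) ⊤ =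
      if ∃ U, QQ (fun β => 0 < f β) σ U then 0 else 1 := by
  have htop : dm (⊤ : ∀ i, Submodule F (V i)) = fun i => Module.finrank F (V i) := by
    funext i
    simp [dm]
  split_ifs with h
  · obtain ⟨U₀, hU₀⟩ := h
    obtain ⟨M, hM, hmax⟩ := Finset.exists_max_image
      (Finset.univ.filter fun U : (∀ i, Submodule F (V i)) => Stab σ U) (fun U => f (dm U))
      ⟨U₀, by simpa using hU₀.1⟩
    have hMs : Stab σ M := (Finset.mem_filter.1 hM).2
    have hmax' : ∀ U, Stab σ U → f (dm U) ≤ f (dm M) := fun U hU =>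
      hmax U (Finset.mem_filter.2 ⟨Finset.mem_univ _, hU⟩)
    have hMpos : 0 < f (dm M) := lt_of_lt_of_le hU₀.2 (hmax' U₀ hU₀.1)
    have hinf : ∀ U W : (∀ i, Submodule F (V i)), Stab σ U → Stab σ W → Stab σ (U ⊓ W) := by
      intro U W hU hW i j t x hx
      exact ⟨hU i j t x hx.1, hW i j t x hx.2⟩
    have hsup : ∀ U W : (∀ i, Submodule F (V i)), Stab σ U → Stab σ W → Stab σ (U ⊔ W) := by
      intro U W hU hW i j t x hx
      obtain ⟨y, hy, z, hz, rfl⟩ := Submodule.mem_sup.1 hx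
      rw [map_add]
      exact Submodule.add_mem_sup (hU i j t y hy) (hW i j t z hz)
    have hmod : ∀ U W : (∀ i, Submodule F (V i)),
        f (dm (U ⊔ W)) + f (dm (U ⊓ W)) = f (dm U) + f (dm W) := by
      intro U W
      rw [← hf, ← hf]
      congr 1
      funext i
      exact Submodule.finrank_sup_add_finrank_inf_eq (U i) (W i)
    refine hh_cone _ M ?_ ⊤ ?_ ?_
    · intro U hU
      refine ⟨hinf U M hU.1 hMs, ?_⟩
      have h1 := hmod U M
      have h2 := hmax' _ (hsup U M hU.1 hMs)
      have h3 : 0 < f (dm U) := hU.2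
      show 0 < f _
      linarith
    · rw [top_inf_eq]
      exact ⟨hMs, hMpos⟩
    · intro hle
      have : M = ⊤ := top_le_iff.1 hle
      rw [this, htop, hV] at hMpos
      exact lt_irrefl _ hMpos
  · exact hh_empty _ _ fun y _ hy => h ⟨y, hy⟩

end

/-! ### Translation to the frozen definitions -/

/-- `θ(β) - μ ht(β)`. -/
def slopeDefect {n : ℕ} (θ : (Fin n → ℤ) →ₗ[ℤ] ℤ) (μ : ℚ) (β : Fin n → ℕ) : ℚ :=
  (θ (fun i => (β i : ℤ)) : ℚ) - μ * ((∑ i, β i : ℕ) : ℚ)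

theorem slopeDefect_add {n : ℕ} (θ : (Fin n → ℤ) →ₗ[ℤ] ℤ) (μ : ℚ) (β γ : Fin n → ℕ) :
    slopeDefect θ μ (β + γ) = slopeDefect θ μ β + slopeDefect θ μ γ := by
  unfold slopeDefect
  have : (fun i => (((β + γ) i : ℕ) : ℤ)) = (fun i => (β i : ℤ)) + fun i => (γ i : ℤ) := by
    funext i
    simp
  rw [this, map_add]
  simp only [Pi.add_apply, Finset.sum_add_distrib]
  push_cast
  ring

theorem slopeDefect_zero {n : ℕ} (θ : (Fin n → ℤ) →ₗ[ℤ] ℤ) (μ : ℚ) :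
    slopeDefect θ μ 0 = 0 := by
  have := slopeDefect_add θ μ 0 0
  rw [add_zero] at this
  linarith

theorem ht_pos {n : ℕ} {β : Fin n → ℕ} (hβ : β ≠ 0) : (0 : ℚ) < ((∑ i, β i : ℕ) : ℚ) := by
  obtain ⟨i, hi⟩ := Function.ne_iff.1 hβ
  have : 0 < ∑ i, β i :=
    Finset.sum_pos' (fun _ _ => Nat.zero_le _) ⟨i, Finset.mem_univ _, Nat.pos_of_ne_zero hi⟩
  exact_mod_cast this

theorem slopeDefect_pos {n : ℕ} (θ : (Fin n → ℤ) →ₗ[ℤ] ℤ) (μ : ℚ) {β : Fin n → ℕ} (hβ : β ≠ 0) :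
    0 < slopeDefect θ μ β ↔ μ < qSlope n θ β := by
  unfold slopeDefect qSlope
  rw [lt_div_iff₀ (ht_pos hβ), sub_pos]

/-- Matrix representations as representations by linear maps. -/
noncomputable def qrepEquiv (F : Type) [Field F] {n : ℕ} (a : Fin n → Fin n → ℕ)
    (α : Fin n → ℕ) : QRep n a F α ≃ GRep F a (fun i => Fin (α i) → F) :=
  Equiv.piCongrRight fun _ => Equiv.piCongrRight fun _ => Equiv.piCongrRight fun _ =>
    Matrix.toLin'.toEquiv

theorem semistable_iff {F : Type} [Field F] [Fintype F] {n : ℕ} {a : Fin n → Fin n → ℕ}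
    (θ : (Fin n → ℤ) →ₗ[ℤ] ℤ) (μ : ℚ) (α : Fin n → ℕ) (hα : α ≠ 0)
    (hα0 : slopeDefect θ μ α = 0) (hμ : qSlope n θ α = μ) (σ : QRep n a F α) :
    IsSemistable θ σ ↔
      ¬ ∃ U, QQ (fun β => 0 < slopeDefect θ μ β) (qrepEquiv F a α σ) U := by
  have hst : ∀ i j t x, qrepEquiv F a α σ i j t x = (σ i j t).mulVec x := fun i j t x => rfl
  constructor
  · rintro hs ⟨U, hU, hpos⟩
    have hne : dm U ≠ 0 := by
      intro h0
      simp only [h0, slopeDefect_zero, lt_irrefl] at hpos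
    have h1 : ∃ i, U i ≠ ⊥ := by
      by_contra! h
      apply hne
      funext i
      simp [dm, h i]
    have h2 : ∃ i, U i ≠ ⊤ := by
      by_contra! h
      have : dm U = α := by
        funext i
        show Module.finrank F (U i) = α i
        rw [h i, finrank_top]
        simp
      simp only [this, hα0, lt_irrefl] at hpos
    have h3 := hs ⟨U, fun i j t x hx => by rw [← hst]; exact hU i j t x hx⟩ h1 h2
    rw [hμ] at h3
    exact absurd ((slopeDefect_pos θ μ hne).1 hpos) (not_lt.2 h3)
  · intro h W h1 h2
    by_contra! h3
    apply h
    refine ⟨W.U, fun i j t x hx => by rw [hst]; exact W.stable i j t x hx, ?_⟩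
    have hne : dm W.U ≠ 0 := by
      intro h0
      obtain ⟨i, hi⟩ := h1
      exact hi (Submodule.finrank_eq_zero.1 (congrFun h0 i))
    rw [hμ] at h3
    exact (slopeDefect_pos θ μ hne).2 h3

/-- Reineke's Harder–Narasimhan recursion: for `α ≠ 0` with `θ(α) = μ·ht(α)`,
`R^{ss}_μ(α,q)/|GL(α,F_q)|` equals the sum over all tuples `(α^1,…,α^s)` of non-zero
dimension vectors with `Σ α^i = α` and `μ(α^1 + ⋯ + α^i) > μ(α)` for `1 ≤ i ≤ s−1` of
`(−1)^{s−1} q^{−Σ_{i<j}⟨α^j,α^i⟩} ∏_i R(α^i,q)/|GL(α^i,F_q)|`. -/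
theorem reineke_recursion (F : Type) [Field F] [Fintype F]
    (n : ℕ) (a : Fin n → Fin n → ℕ) (θ : (Fin n → ℤ) →ₗ[ℤ] ℤ) (μ : ℚ)
    (α : Fin n → ℕ) (hα : α ≠ 0) (hslope : qSlopeIs n θ μ α) :
    (Rss F n a θ μ α : ℚ) / cardGLq (Fintype.card F) α =
      ∑ᶠ L : List (Fin n → ℕ),
        if L ≠ [] ∧ (∀ β ∈ L, β ≠ 0) ∧ L.sum = α ∧
            (∀ i : ℕ, 1 ≤ i → i + 1 ≤ L.length →
              qSlope n θ (L.take i).sum > qSlope n θ α) then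
          (-1 : ℚ) ^ (L.length - 1) *
            (Fintype.card F : ℚ) ^
              (-(∑ p ∈ Finset.univ.filter
                  (fun p : Fin L.length × Fin L.length => p.1 < p.2),
                    eulerForm n a (L.get p.2) (L.get p.1))) *
            ∏ s : Fin L.length,
              Rall (Fintype.card F) n a (L.get s) / cardGLq (Fintype.card F) (L.get s)
        else 0 := by
  set P : (Fin n → ℕ) → Prop := fun β => 0 < slopeDefect θ μ β with hPdef
  have hP0 : ¬ P 0 := by
    simp [hPdef, slopeDefect_zero]
  have hα0 : slopeDefect θ μ α = 0 := by
    unfold slopeDefect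
    rw [sub_eq_zero]
    exact hslope
  have hμ : qSlope n θ α = μ := by
    unfold qSlope
    rw [hslope]
    exact mul_div_cancel_right₀ _ (ht_pos hα).ne'
  have hq1 : 1 < (Fintype.card F : ℚ) := by
    exact_mod_cast Fintype.one_lt_card (α := F)
  obtain ⟨D, hD, hcount⟩ := main_count (F := F) (a := a) P hP0 _ α rfl hα
  have hLHS : (Rss F n a θ μ α : ℚ) =
      cardGLq (Fintype.card F) α * ∑ L ∈ D, LTerm (Fintype.card F) a L := by
    rw [← hcount (fun i => Fin (α i) → F) (by simp)]
    unfold Rss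
    rw [Nat.card_eq_fintype_card, Fintype.card_subtype, Finset.card_filter, Nat.cast_sum]
    refine Fintype.sum_equiv (qrepEquiv F a α) _ _ fun σ => ?_
    rw [hh_semistable (slopeDefect θ μ) (slopeDefect_add θ μ) (by simpa using hα0)]
    have := semistable_iff θ μ α hα hα0 hμ σ
    by_cases hs : IsSemistable θ σ
    · rw [if_pos ⟨hs, hslope⟩, if_neg (this.1 hs)]
      simp
    · rw [if_neg (fun h => hs h.1), if_pos (not_not.1 (fun h => hs (this.2 h)))]
      simp
  rw [hLHS, mul_div_cancel_left₀ _ (cardGLq_ne_zero _ hq1 α)]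
  have hcond : ∀ L : List (Fin n → ℕ), (L ≠ [] ∧ (∀ β ∈ L, β ≠ 0) ∧ L.sum = α ∧
            (∀ i : ℕ, 1 ≤ i → i + 1 ≤ L.length →
              qSlope n θ (L.take i).sum > qSlope n θ α)) ↔ L ∈ D := by
    intro L
    rw [hD]
    refine and_congr_right fun h1 => and_congr_right fun h2 => and_congr_right fun h3 =>
      forall_congr' fun i => forall_congr' fun hi => forall_congr' fun hi' => ?_
    rw [hμ]
    refine (slopeDefect_pos θ μ ?_).symm
    cases L with
    | nil => exact absurd rfl h1
    | cons x L =>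
      obtain ⟨m, rfl⟩ : ∃ m, i = m + 1 := ⟨i - 1, by omega⟩
      rw [List.take_succ_cons, List.sum_cons]
      intro h0
      exact h2 x (by simp) (add_eq_zero.1 h0).1
  rw [finsum_eq_sum_of_support_subset (s := D)]
  · refine Finset.sum_congr rfl fun L hL => ?_
    rw [if_pos ((hcond L).2 hL)]
    rfl
  · intro L hL
    by_contra hLD
    rw [Function.mem_support] at hL
    exact hL (if_neg fun h => hLD ((hcond L).1 h))
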